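/- Let λ, μ ⊢ n. The multiplicity ⟨φ_λ, χ_{SP_μ}⟩ of the Specht module SP_μ in the representation of S_n induced from the identity representation of the Young subgroup H(λ) is nonzero if and only if μ dominates λ (μ ⊵ λ). -/

import Mathlib

open scoped Classical

noncomputable section

open MvPolynomial

/-- `Dominates μ λ` : μ ⊵ λ in the dominance order (partial row sums of λ are ≤ those of μ). -/
def Dominates (mu lam : YoungDiagram) : Prop :=
  ∀ k : ℕ, ∑ i ∈ Finset.range k, lam.rowLen i ≤ ∑ i ∈ Finset.range k, mu.rowLen i

/-- Partial sums of the row lengths of a Young diagram. -/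
def rowPartialSum (lam : YoungDiagram) (i : ℕ) : ℕ :=
  ∑ j ∈ Finset.range i, lam.rowLen j

/-- The (0-indexed) row of the canonical tableau of shape `lam` containing the entry `m`
(the entries `0,…,n-1` fill the cells consecutively row by row). -/
def rowIndex (lam : YoungDiagram) (m : ℕ) : ℕ :=
  ((Finset.range (m + 1)).filter fun i => rowPartialSum lam (i + 1) ≤ m).card

/-- The Young subgroup `H(λ) ≤ S_n`: permutations preserving each row of the canonical
tableau of shape `λ`. -/
def youngH (n : ℕ) (lam : YoungDiagram) : Subgroup (Equiv.Perm (Fin n)) where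
  carrier := {g | ∀ m : Fin n, rowIndex lam (g m) = rowIndex lam m}
  one_mem' := by intro m; simp
  mul_mem' := by
    intro a b ha hb m
    have h1 := ha (b m)
    have h2 := hb m
    simpa [Equiv.Perm.mul_apply] using h1.trans h2
  inv_mem' := by
    intro a ha m
    simpa using (ha (a⁻¹ m)).symm

/-- The character of the representation induced from the trivial representation of a
subgroup `H`:  `φ(g) = (1/|H|) · #{x : x⁻¹ g x ∈ H}`. -/
noncomputable def indTrivChar {G : Type*} [Group G] (H : Subgroup G) (g : G) : ℂ :=
  (Nat.card H : ℂ)⁻¹ * (Nat.card {x : G // x⁻¹ * g * x ∈ H} : ℂ)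

/-- The inner product of class functions on a finite group:
`⟨a,b⟩ = (1/|G|) Σ_g a g * conj (b g)`. -/
noncomputable def innerChar {G : Type*} [Group G] [Fintype G] (a b : G → ℂ) : ℂ :=
  (Fintype.card G : ℂ)⁻¹ * ∑ g : G, a g * (starRingEnd ℂ) (b g)

/-- The Specht polynomial of a bijective filling `T` of the cells of `lam` by `0,…,n-1`:
the product over all pairs of cells in the same column (the first strictly above the
second) of the differences of the corresponding variables — i.e. the product of the
column Vandermonde determinants. -/
noncomputable def spechtPoly (n : ℕ) (lam : YoungDiagram) (T : lam.cells ≃ Fin n) :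
    MvPolynomial (Fin n) ℂ :=
  ∏ p ∈ Finset.univ.filter
      (fun p : lam.cells × lam.cells =>
        (p.1 : ℕ × ℕ).2 = (p.2 : ℕ × ℕ).2 ∧ (p.1 : ℕ × ℕ).1 < (p.2 : ℕ × ℕ).1),
    (X (T p.1) - X (T p.2))

/-- The Specht module: the linear span of all Specht polynomials of shape `lam`. -/
noncomputable def spechtModule (n : ℕ) (lam : YoungDiagram) :
    Submodule ℂ (MvPolynomial (Fin n) ℂ) :=
  Submodule.span ℂ (Set.range (spechtPoly n lam))

lemma rename_spechtPoly (n : ℕ) (lam : YoungDiagram) (T : lam.cells ≃ Fin n)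
    (g : Equiv.Perm (Fin n)) :
    MvPolynomial.rename g (spechtPoly n lam T) = spechtPoly n lam (T.trans g) := by
  simp only [spechtPoly, map_prod, map_sub, MvPolynomial.rename_X]
  rfl

lemma spechtModule_invariant (n : ℕ) (lam : YoungDiagram) (g : Equiv.Perm (Fin n)) :
    ∀ p ∈ spechtModule n lam,
      (MvPolynomial.rename (σ := Fin n) (R := ℂ) g).toLinearMap p ∈ spechtModule n lam := by
  intro p hp
  induction hp using Submodule.span_induction with
  | mem x hx =>
      obtain ⟨T, rfl⟩ := hx
      simp only [AlgHom.toLinearMap_apply, rename_spechtPoly]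
      exact Submodule.subset_span ⟨_, rfl⟩
  | zero => simp
  | add x y _ _ hx hy => rw [map_add]; exact add_mem hx hy
  | smul a x _ hx => rw [map_smul]; exact Submodule.smul_mem _ _ hx

/-- The character of the representation of the symmetric group on the Specht module
(permutations act on polynomials by permuting the variables). -/
noncomputable def spechtChar (n : ℕ) (lam : YoungDiagram) (g : Equiv.Perm (Fin n)) : ℂ :=
  LinearMap.trace ℂ (spechtModule n lam)
    (LinearMap.restrict (MvPolynomial.rename (σ := Fin n) (R := ℂ) g).toLinearMap
      (spechtModule_invariant n lam g))

/-!
By Frobenius reciprocity the multiplicity is the dimension of the space of `H(λ)`-invariants of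
`SP_μ`, and this space is nonzero iff the norm `∑ h, h` of `H(λ)` does not kill some Specht
polynomial `SP_T`. Label each cell of `μ` by the row of `t_λ` containing its entry in `T`.

* If two cells in a column of `T` have equal labels, `H(λ)` contains the transposition of their
  entries; it negates `SP_T`, so the norm kills `SP_T`.
* If the labels are distinct within each column, evaluate at the point whose `m`-th coordinate is
  the row of `m`: this point is fixed by `H(λ)` and `SP_T` does not vanish there.

So the multiplicity is nonzero iff the cells of `μ` carry a labelling which is injective on columns
and uses the label `i` exactly `λ_i` times. In such a labelling each column holds at most
`min(k, height)` labels below `k`, whence `μ ⊵ λ`. Conversely, start from the labelling of each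
cell by its own row and keep relabelling one cell to a larger label while staying above `λ` in the
dominance order; when the sum of the labels is maximal, the content is `λ`.
-/

open Function
open scoped Finset

section Frobenius

variable {G : Type*} [Group G] [Fintype G]

lemma sum_card_conj_mem_mul {R : Type*} [CommSemiring R] (H : Subgroup G) {f : G → R}
    (hf : ∀ g x, f (x * g * x⁻¹) = f g) :
    ∑ g, (Nat.card {x : G // x⁻¹ * g * x ∈ H} : R) * f g = Fintype.card G * ∑ h : H, f h := by
  have sum_conj (x : G) : ∑ g with x⁻¹ * g * x ∈ H, f g = ∑ h : H, f h := by
    rw [← Finset.sum_subtype {g | g ∈ H} (by simp) f]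
    refine Finset.sum_equiv (MulAut.conj x).symm.toEquiv (by simp [MulAut.conj_symm_apply]) ?_
    intro g _
    simpa using (hf g x⁻¹).symm
  calc ∑ g, (Nat.card {x : G // x⁻¹ * g * x ∈ H} : R) * f g
      = ∑ g, ∑ x, if x⁻¹ * g * x ∈ H then f g else 0 := by
        simp only [Nat.card_eq_fintype_card, Fintype.card_subtype, ← Finset.sum_filter,
          Finset.sum_const, nsmul_eq_mul]
    _ = ∑ x, ∑ g with x⁻¹ * g * x ∈ H, f g := by
        rw [Finset.sum_comm]
        simp only [Finset.sum_filter]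
    _ = Fintype.card G * ∑ h : H, f h := by simp [sum_conj]

theorem innerChar_indTrivChar (H : Subgroup G) {f : G → ℂ}
    (hf : ∀ g x, f (x * g * x⁻¹) = f g) :
    innerChar (indTrivChar H) f = innerChar (1 : H → ℂ) (f ∘ H.subtype) := by
  have sum_eq := sum_card_conj_mem_mul H (f := fun g => starRingEnd ℂ (f g)) (by simp [hf])
  have hG : (Fintype.card G : ℂ) ≠ 0 := Nat.cast_ne_zero.mpr Fintype.card_ne_zero
  calc innerChar (indTrivChar H) f
      = (Fintype.card G : ℂ)⁻¹ * ((Nat.card H : ℂ)⁻¹ *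
          ∑ g, (Nat.card {x : G // x⁻¹ * g * x ∈ H} : ℂ) * starRingEnd ℂ (f g)) := by
        simp only [innerChar, indTrivChar, Finset.mul_sum, mul_assoc (Nat.card H : ℂ)⁻¹]
    _ = innerChar 1 (f ∘ H.subtype) := by
        rw [sum_eq, mul_left_comm, inv_mul_cancel_left₀ hG]
        simp [innerChar]

variable {V : Type*} [AddCommGroup V] [Module ℂ V] [FiniteDimensional ℂ V]

theorem innerChar_one_character (ρ : Representation ℂ G V) :
    innerChar 1 ρ.character = Module.finrank ℂ ρ.invariants := by
  have : Invertible (Nat.card G : ℂ) := invertibleOfNonzero (NeZero.ne _)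
  rw [← Complex.conj_natCast, ← ρ.card_inv_mul_sum_char_eq_finrank]
  simp [innerChar]

theorem innerChar_indTrivChar_character (ρ : Representation ℂ G V) (H : Subgroup G) :
    innerChar (indTrivChar H) ρ.character =
      Module.finrank ℂ (Representation.invariants (ρ.comp H.subtype)) := by
  rw [innerChar_indTrivChar H ρ.char_conj, ← innerChar_one_character]
  rfl

end Frobenius

section Norm

variable {k G V : Type*} [Field k] [Group G] [Fintype G] [NeZero (Nat.card G : k)]
  [AddCommGroup V] [Module k V] (ρ : Representation k G V)

lemma norm_eq_zero_iff_invariants_eq_bot : ρ.norm = 0 ↔ ρ.invariants = ⊥ := by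
  refine ⟨fun h => (Submodule.eq_bot_iff _).mpr fun v hv => ?_, fun h => ?_⟩
  · have norm_v : ρ.norm v = (Nat.card G : k) • v := by
      simp [Representation.norm, (ρ.mem_invariants v).mp hv, Nat.cast_smul_eq_nsmul]
    rw [h, LinearMap.zero_apply] at norm_v
    exact (smul_eq_zero.mp norm_v.symm).resolve_left (NeZero.ne _)
  · ext v
    have : ρ.norm v ∈ ρ.invariants := fun g => ρ.self_norm_apply g v
    simpa [h] using this

lemma invariants_ne_bot_iff_of_span_range_eq_top {ι : Type*} {v : ι → V}
    (hv : Submodule.span k (Set.range v) = ⊤) :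
    ρ.invariants ≠ ⊥ ↔ ∃ i, ρ.norm (v i) ≠ 0 := by
  rw [← not_forall, not_iff_not, ← norm_eq_zero_iff_invariants_eq_bot]
  exact ⟨fun h i => by simp [h], fun h => LinearMap.ext_on_range hv h⟩

end Norm

section Sign

variable {ι R : Type*} [Fintype ι] [CommRing R] {f : ι → ι → R}

lemma prod_lt_comp_eq_sign_mul_prod [LinearOrder ι] (σ : Equiv.Perm ι)
    (hf : ∀ a b, f a b = -f b a) :
    ∏ p : ι × ι with p.1 < p.2, f (σ p.1) (σ p.2) =
      σ.sign * ∏ p : ι × ι with p.1 < p.2, f p.1 p.2 := by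
  let e := Fintype.orderIsoFinOfCardEq ι rfl
  have prod_eq (g : ι → ι → R) : ∏ p : ι × ι with p.1 < p.2, g p.1 p.2 =
      ∏ j, ∏ i ∈ Finset.Iio j, g (e i) (e j) := by
    rw [Finset.prod_sigma']
    refine Finset.prod_bij' (fun p _ => ⟨e.symm p.2, e.symm p.1⟩) (fun x _ => (e x.2, e x.1))
      ?_ ?_ ?_ ?_ ?_ <;> simp
  rw [prod_eq fun a b => f (σ a) (σ b), prod_eq f, ← Equiv.Perm.sign_permCongr e.symm.toEquiv σ,
    ← Equiv.Perm.prod_Iio_comp_eq_sign_mul_prod _ fun _ _ => hf _ _]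
  simp [Equiv.permCongr_apply]

lemma prod_lt_of_eq_comp_eq_sign_mul_prod [DecidableEq ι] {α β : Type*} [LinearOrder α]
    [LinearOrder β] {col : ι → β} {row : ι → α} (hinj : Injective fun c => (col c, row c))
    {σ : Equiv.Perm ι} (hσ : ∀ a, col (σ a) = col a) (hf : ∀ a b, f a b = -f b a) :
    ∏ p : ι × ι with col p.1 = col p.2 ∧ row p.1 < row p.2, f (σ p.1) (σ p.2) =
      σ.sign * ∏ p : ι × ι with col p.1 = col p.2 ∧ row p.1 < row p.2, f p.1 p.2 := by
  let : LinearOrder ι := LinearOrder.lift' (fun c => toLex (col c, row c)) hinj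
  have lt_iff (a b : ι) : a < b ↔ col a < col b ∨ col a = col b ∧ row a < row b :=
    Prod.Lex.toLex_lt_toLex
  -- `σ` preserves the order of pairs in distinct columns, so those may contribute signs `±1`.
  let F (a b : ι) : R := if col a < col b then 1 else if col b < col a then -1 else f a b
  have hF (a b : ι) : F a b = -F b a := by
    simp only [F]
    split_ifs with h₁ h₂
    exacts [absurd h₁ h₂.asymm, (neg_neg 1).symm, rfl, hf a b]
  have prod_F (τ : Equiv.Perm ι) (hτ : ∀ a, col (τ a) = col a) :
      ∏ p : ι × ι with p.1 < p.2, F (τ p.1) (τ p.2) =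
        ∏ p : ι × ι with col p.1 = col p.2 ∧ row p.1 < row p.2, f (τ p.1) (τ p.2) := by
    symm
    refine Finset.prod_subset_one_on_sdiff (fun p hp => ?_) (fun p hp => ?_) fun p hp => ?_
    · simp only [Finset.mem_filter_univ, lt_iff] at hp ⊢
      exact Or.inr hp
    · simp only [Finset.mem_sdiff, Finset.mem_filter_univ, lt_iff] at hp
      simp [F, hτ, hp.1.resolve_right hp.2]
    · simp [F, hτ, (Finset.mem_filter_univ p).mp hp]
  have prod_F_one := prod_F 1 fun _ => rfl
  simp only [Equiv.Perm.one_apply] at prod_F_one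
  rw [← prod_F σ hσ, ← prod_F_one]
  convert prod_lt_comp_eq_sign_mul_prod σ hF

end Sign

section Specht

variable {n : ℕ} {mu : YoungDiagram}

lemma spechtPoly_trans_of_col_eq (T : mu.cells ≃ Fin n) {σ : Equiv.Perm mu.cells}
    (hσ : ∀ c, (σ c).1.2 = c.1.2) :
    spechtPoly n mu (σ.trans T) = (σ.sign : MvPolynomial (Fin n) ℂ) * spechtPoly n mu T := by
  have hinj : Injective fun c : mu.cells => (c.1.2, c.1.1) := fun _ _ h =>
    Subtype.ext (Prod.swap_injective h)
  exact prod_lt_of_eq_comp_eq_sign_mul_prod hinj hσ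
    (f := fun a b => (X (T a) - X (T b) : MvPolynomial (Fin n) ℂ)) fun _ _ => (neg_sub _ _).symm

lemma rename_swap_spechtPoly (T : mu.cells ≃ Fin n) {c d : mu.cells} (hne : c ≠ d)
    (hcol : c.1.2 = d.1.2) :
    rename (Equiv.swap (T c) (T d)) (spechtPoly n mu T) = -spechtPoly n mu T := by
  have htrans : T.trans (Equiv.swap (T c) (T d)) = (Equiv.swap c d).trans T :=
    Equiv.ext fun e => (T.injective.map_swap c d e).symm
  have hswap (e : mu.cells) : (Equiv.swap c d e).1.2 = e.1.2 := by
    rw [Equiv.swap_apply_def]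
    split_ifs with hc hd
    exacts [hc ▸ hcol.symm, hd ▸ hcol, rfl]
  rw [rename_spechtPoly, htrans, spechtPoly_trans_of_col_eq T hswap, Equiv.Perm.sign_swap hne]
  simp

lemma eval_spechtPoly_ne_zero_iff (T : mu.cells ≃ Fin n) (y : Fin n → ℂ) :
    eval y (spechtPoly n mu T) ≠ 0 ↔ Injective fun c : mu.cells => (c.1.2, y (T c)) := by
  simp only [spechtPoly, map_prod, map_sub, eval_X, Finset.prod_ne_zero_iff, sub_ne_zero,
    Finset.mem_filter_univ]
  constructor
  · intro h c d hcd
    obtain ⟨hcol, hy⟩ := Prod.ext_iff.mp hcd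
    rcases lt_trichotomy c.1.1 d.1.1 with hlt | hrow | hlt
    · exact absurd hy (h (c, d) ⟨hcol, hlt⟩)
    · exact Subtype.ext (Prod.ext hrow hcol)
    · exact absurd hy.symm (h (d, c) ⟨hcol.symm, hlt⟩)
  · rintro h ⟨c, d⟩ ⟨hcol, hlt⟩ hy
    exact hlt.ne (congrArg (·.1.1) (h (Prod.ext hcol hy)))

variable (n mu) in
/-- The Specht module as a representation of `S_n`; its character is `spechtChar`. -/
def spechtRep : Representation ℂ (Equiv.Perm (Fin n)) (spechtModule n mu) where
  toFun g := (rename (R := ℂ) g).toLinearMap.restrict (spechtModule_invariant n mu g)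
  map_one' := by
    ext v : 2
    simp [LinearMap.restrict_apply]
  map_mul' g h := by
    ext v : 2
    simp [LinearMap.restrict_apply, rename_rename]

lemma spechtChar_eq_character : spechtChar n mu = (spechtRep n mu).character := rfl

lemma coe_spechtRep_apply (g : Equiv.Perm (Fin n)) (v : spechtModule n mu) :
    (spechtRep n mu g v : MvPolynomial (Fin n) ℂ) = rename g v.1 := rfl

instance finiteDimensional_spechtModule : FiniteDimensional ℂ (spechtModule n mu) :=
  FiniteDimensional.span_of_finite ℂ (Set.finite_range _)

/-- The Specht polynomial `SP_T` as an element of the Specht module. -/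
def spechtVector (T : mu.cells ≃ Fin n) : spechtModule n mu :=
  ⟨spechtPoly n mu T, Submodule.subset_span ⟨T, rfl⟩⟩

lemma span_range_spechtVector :
    Submodule.span ℂ (Set.range (spechtVector (n := n) (mu := mu))) = ⊤ := by
  refine Submodule.map_injective_of_injective (spechtModule n mu).injective_subtype ?_
  rw [Submodule.map_span, ← Set.range_comp, Submodule.map_subtype_top]
  rfl

variable (H : Subgroup (Equiv.Perm (Fin n)))

lemma norm_spechtVector_eq_zero {T : mu.cells ≃ Fin n} {c d : mu.cells} (hne : c ≠ d)
    (hcol : c.1.2 = d.1.2) (hH : Equiv.swap (T c) (T d) ∈ H) :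
    Representation.norm ((spechtRep n mu).comp H.subtype) (spechtVector T) = 0 := by
  have hneg : (spechtRep n mu).comp H.subtype ⟨_, hH⟩ (spechtVector T) = -spechtVector T :=
    Subtype.ext (rename_swap_spechtPoly T hne hcol)
  have h := Representation.norm_self_apply ((spechtRep n mu).comp H.subtype) ⟨_, hH⟩
    (spechtVector T)
  rw [hneg, map_neg] at h
  have two_smul_eq_zero := neg_eq_iff_add_eq_zero.mp h
  rw [← two_smul ℂ] at two_smul_eq_zero
  exact (smul_eq_zero.mp two_smul_eq_zero).resolve_left two_ne_zero

lemma eval_norm_spechtRep {y : Fin n → ℂ} (hy : ∀ g ∈ H, y ∘ g = y) (v : spechtModule n mu) :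
    eval y (Representation.norm ((spechtRep n mu).comp H.subtype) v).1 =
      Fintype.card H * eval y v.1 := by
  have heval (h : H) : eval y (spechtRep n mu h v).1 = eval y v.1 := by
    rw [coe_spechtRep_apply, eval_rename, hy h h.2]
  simp [Representation.norm, heval]

lemma swap_mem_youngH_iff {lam : YoungDiagram} {a b : Fin n} :
    Equiv.swap a b ∈ youngH n lam ↔ rowIndex lam a = rowIndex lam b := by
  refine ⟨fun h => by simpa using (h a).symm, fun h m => ?_⟩
  rw [Equiv.swap_apply_def]
  split_ifs with ha hb
  exacts [ha ▸ h.symm, hb ▸ h, rfl]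

lemma norm_youngH_spechtVector_ne_zero_iff (lam : YoungDiagram) (T : mu.cells ≃ Fin n) :
    Representation.norm ((spechtRep n mu).comp (youngH n lam).subtype) (spechtVector T) ≠ 0 ↔
      Injective fun c : mu.cells => (c.1.2, rowIndex lam (T c)) := by
  constructor
  · intro h c d hcd
    obtain ⟨hcol, hrow⟩ := Prod.ext_iff.mp hcd
    by_contra hne
    exact h (norm_spechtVector_eq_zero _ hne hcol (swap_mem_youngH_iff.mpr hrow))
  · intro hinj hzero
    let y : Fin n → ℂ := fun m => rowIndex lam m
    have hy : ∀ g ∈ youngH n lam, y ∘ g = y := fun g hg =>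
      funext fun m => congrArg Nat.cast (hg m)
    have hne : eval y (spechtPoly n mu T) ≠ 0 :=
      (eval_spechtPoly_ne_zero_iff T y).mpr
        ((injective_id.prodMap Nat.cast_injective).comp hinj)
    have heval := eval_norm_spechtRep (youngH n lam) hy (spechtVector T)
    rw [hzero] at heval
    simp [spechtVector, hne] at heval

theorem innerChar_indTrivChar_spechtChar_ne_zero_iff (lam : YoungDiagram) :
    innerChar (indTrivChar (youngH n lam)) (spechtChar n mu) ≠ 0 ↔
      ∃ T : mu.cells ≃ Fin n, Injective fun c : mu.cells => (c.1.2, rowIndex lam (T c)) := by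
  rw [spechtChar_eq_character, innerChar_indTrivChar_character, Nat.cast_ne_zero, Ne,
    Submodule.finrank_eq_zero, ← Ne,
    invariants_ne_bot_iff_of_span_range_eq_top _ span_range_spechtVector]
  simp only [norm_youngH_spechtVector_ne_zero_iff]

end Specht

section RowPartialSum

variable (lam : YoungDiagram)

lemma card_cells_row_lt (k : ℕ) : #{c : lam.cells | c.1.1 < k} = rowPartialSum lam k := by
  simp_rw [rowPartialSum, YoungDiagram.rowLen_eq_card, YoungDiagram.row,
    Finset.sum_card_fiberwise_eq_card_filter, Finset.mem_range]
  rw [← Finset.card_map (Embedding.subtype _)]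
  congr 1
  ext c
  simp [and_comm]

lemma rowPartialSum_mono : Monotone (rowPartialSum lam) := fun _ _ h =>
  Finset.sum_le_sum_of_subset (Finset.range_mono h)

lemma rowPartialSum_le_card (k : ℕ) : rowPartialSum lam k ≤ lam.card := by
  rw [← card_cells_row_lt]
  exact (Finset.card_le_univ _).trans_eq (Fintype.card_coe _)

lemma le_rowPartialSum {k : ℕ} (h : rowPartialSum lam k < lam.card) : k ≤ rowPartialSum lam k := by
  have hcard : lam.card = #(Finset.univ : Finset lam.cells) := by simp
  rw [← card_cells_row_lt, hcard] at h
  obtain ⟨⟨⟨r, j⟩, hmem⟩, -, hrow⟩ := Finset.exists_mem_notMem_of_card_lt_card h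
  have hr : j < lam.rowLen r := YoungDiagram.mem_iff_lt_rowLen.mp (lam.mem_cells _ |>.mp hmem)
  have hkr : k ≤ r := by simpa using hrow
  calc k = ∑ i ∈ Finset.range k, 1 := by simp
    _ ≤ ∑ i ∈ Finset.range k, lam.rowLen i := Finset.sum_le_sum fun i hi =>
        (Nat.one_le_of_lt hr).trans
          (lam.rowLen_anti i r ((Finset.mem_range.mp hi).le.trans hkr))

lemma rowPartialSum_card : rowPartialSum lam lam.card = lam.card :=
  (rowPartialSum_le_card lam _).antisymm (not_lt.mp fun h => (le_rowPartialSum lam h).not_gt h)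

variable {lam}

lemma rowIndex_lt_iff {m k : ℕ} (hm : m < lam.card) :
    rowIndex lam m < k ↔ m < rowPartialSum lam k := by
  have hmono := rowPartialSum_mono lam
  constructor
  · contrapose!
    intro h
    have hk := le_rowPartialSum lam (h.trans_lt hm)
    rw [← Finset.card_range k]
    refine Finset.card_le_card fun i hi => Finset.mem_filter.mpr ?_
    have hik := Finset.mem_range.mp hi
    exact ⟨Finset.mem_range.mpr (by omega), (hmono hik).trans h⟩
  · intro h
    have hsub : ((Finset.range (m + 1)).filter fun i => rowPartialSum lam (i + 1) ≤ m) ⊆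
        Finset.range (k - 1) := fun i hi => by
      have := hmono.reflect_lt ((Finset.mem_filter.mp hi).2.trans_lt h)
      exact Finset.mem_range.mpr (by omega)
    have hk : k ≠ 0 := by
      rintro rfl
      simp [rowPartialSum] at h
    have := Finset.card_le_card hsub
    rw [Finset.card_range] at this
    rw [rowIndex]
    omega

lemma card_rowIndex_lt {n : ℕ} (hn : lam.card = n) (k : ℕ) :
    #{m : Fin n | rowIndex lam m < k} = rowPartialSum lam k := by
  subst hn
  simp only [rowIndex_lt_iff (Fin.is_lt _)]
  rw [Fin.card_filter_val_lt, min_eq_right (rowPartialSum_le_card lam k)]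

lemma card_rowIndex_eq {n : ℕ} (hn : lam.card = n) (i : ℕ) :
    #{m : Fin n | rowIndex lam m = i} = lam.rowLen i := by
  have sum_card (k : ℕ) :
      ∑ j ∈ Finset.range k, #{m : Fin n | rowIndex lam m = j} = rowPartialSum lam k := by
    rw [Finset.sum_card_fiberwise_eq_card_filter]
    simpa only [Finset.mem_range] using card_rowIndex_lt hn k
  have h := sum_card (i + 1)
  rwa [Finset.sum_range_succ, sum_card, rowPartialSum, rowPartialSum, Finset.sum_range_succ,
    Nat.add_left_cancel_iff] at h

end RowPartialSum

section ColumnBound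

variable {mu : YoungDiagram}

lemma card_cells_col_eq_row_lt (j k : ℕ) :
    #{c : mu.cells | c.1.2 = j ∧ c.1.1 < k} = min k (mu.colLen j) := by
  rw [← Finset.card_range (min k (mu.colLen j))]
  refine Finset.card_bij' (fun c _ => c.1.1)
    (fun i hi => ⟨(i, j), YoungDiagram.mem_iff_lt_colLen.mpr
      (lt_min_iff.mp (Finset.mem_range.mp hi)).2⟩) ?_ ?_ ?_ ?_
  · rintro ⟨⟨r, j'⟩, hmem⟩ hc
    obtain ⟨rfl, hlt⟩ := (Finset.mem_filter_univ _).mp hc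
    exact Finset.mem_range.mpr (lt_min hlt (YoungDiagram.mem_iff_lt_colLen.mp hmem))
  · simp +contextual
  · rintro ⟨⟨r, j'⟩, hmem⟩ hc
    obtain ⟨rfl, -⟩ := (Finset.mem_filter_univ _).mp hc
    rfl
  · simp

lemma card_filter_le_of_forall_fiber_le {ι β : Type*} [Fintype ι] [DecidableEq β]
    {p q : ι → Prop} [DecidablePred p] [DecidablePred q] (f : ι → β)
    (h : ∀ b, #{a | p a ∧ f a = b} ≤ #{a | q a ∧ f a = b}) : #{a | p a} ≤ #{a | q a} := by
  have mapsTo (t : Finset ι) : Set.MapsTo f t (Finset.univ.image f : Finset β) := by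
    simp [Set.MapsTo]
  rw [Finset.card_eq_sum_card_fiberwise (mapsTo _), Finset.card_eq_sum_card_fiberwise (mapsTo _)]
  simp only [Finset.filter_filter]
  exact Finset.sum_le_sum fun b _ => h b

lemma card_label_mem_le_rowPartialSum {α : Type*} {s : mu.cells → α}
    (hs : Injective fun c : mu.cells => (c.1.2, s c)) (A : Finset α) :
    #{c | s c ∈ A} ≤ rowPartialSum mu #A := by
  have card_col_le (j : ℕ) :
      #{c | s c ∈ A ∧ c.1.2 = j} ≤ #{c : mu.cells | c.1.1 < #A ∧ c.1.2 = j} := by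
    simp only [and_comm (b := _ = j)]
    rw [card_cells_col_eq_row_lt]
    refine le_min (Finset.card_le_card_of_injOn s (by simp +contextual [Set.MapsTo]) ?_) ?_
    · intro c hc d hd h
      exact hs (Prod.ext (by simp_all) h)
    · rw [← min_self (mu.colLen j), ← card_cells_col_eq_row_lt]
      refine Finset.card_le_card fun c hc => ?_
      obtain ⟨rfl, -⟩ := (Finset.mem_filter_univ _).mp hc
      simpa using YoungDiagram.mem_iff_lt_colLen.mp c.2
  rw [← card_cells_row_lt]
  exact card_filter_le_of_forall_fiber_le _ card_col_le

end ColumnBound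

section Exchange

lemma injective_update_label {ι β γ : Type*} [DecidableEq ι] {col : ι → β} {s : ι → γ}
    (hs : Injective fun c => (col c, s c)) {c : ι} {k : γ} (hc : ∀ d, col d = col c → s d ≠ k) :
    Injective fun d => (col d, update s c k d) := by
  intro a b h
  have := @hs a b
  have := hc a
  have := hc b
  grind [Prod.ext_iff]

lemma exists_label_eq_forall_col_ne {ι β γ : Type*} [Fintype ι] [DecidableEq γ] {col : ι → β}
    {s : ι → γ} (hs : Injective fun c => (col c, s c)) {i k : γ}
    (h : #{c | s c = k} < #{c | s c = i}) :
    ∃ c, s c = i ∧ ∀ d, col d = col c → s d ≠ k := by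
  have card_image : #(Finset.image col {c | s c = i}) = #{c | s c = i} :=
    Finset.card_image_of_injOn fun c hc d hd hcd => hs <| by simp_all
  obtain ⟨j, hj, hjk⟩ := Finset.exists_mem_notMem_of_card_lt_card
    ((Finset.card_image_le (f := col)).trans_lt (h.trans_eq card_image.symm))
  obtain ⟨c, hc, rfl⟩ := Finset.mem_image.mp hj
  refine ⟨c, by simpa using hc, fun d hd hk => hjk ?_⟩
  exact Finset.mem_image.mpr ⟨d, by simpa using hk, hd⟩

variable {ι β : Type*} [Fintype ι] {col : ι → β} {α : ℕ → ℕ} {s : ι → ℕ}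

lemma sum_range_le_card_update_lt {c : ι} {k : ℕ}
    (hdom : ∀ K, ∑ i ∈ Finset.range K, α i ≤ #{c | s c < K})
    (hle : ∀ j < k, α j ≤ #{c | s c = j}) (hlt : α (s c) < #{d | s d = s c}) (K : ℕ) :
    ∑ i ∈ Finset.range K, α i ≤ #{d | update s c k d < K} := by
  have erase_subset :
      ({d | s d < K} : Finset ι).erase c ⊆ ({d | update s c k d < K} : Finset ι) := by
    intro d hd
    simp_all
  by_cases hK : s c < K ∧ K ≤ k
  · have strict : ∑ i ∈ Finset.range K, α i < #{d | s d < K} := by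
      have := Finset.sum_card_fiberwise_eq_card_filter Finset.univ (Finset.range K) s
      simp only [Finset.mem_range] at this
      rw [← this]
      exact Finset.sum_lt_sum (fun j hj => hle j ((Finset.mem_range.mp hj).trans_le hK.2))
        ⟨s c, Finset.mem_range.mpr hK.1, hlt⟩
    have hcard := Finset.card_erase_add_one (s := {d | s d < K}) (a := c) (by simpa using hK.1)
    have := Finset.card_le_card erase_subset
    omega
  · refine (hdom K).trans (Finset.card_le_card fun d hd => ?_)
    simp only [Finset.mem_filter_univ, update_apply] at hd ⊢
    split_ifs with h
    · subst h; omega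
    · exact hd

lemma exists_label_sum_lt (hα : Antitone α) (hs : Injective fun c => (col c, s c))
    (hdom : ∀ K, ∑ i ∈ Finset.range K, α i ≤ #{c | s c < K}) (hex : ∃ k, #{c | s c = k} < α k) :
    ∃ s' : ι → ℕ, Injective (fun c => (col c, s' c)) ∧
      (∀ K, ∑ i ∈ Finset.range K, α i ≤ #{c | s' c < K}) ∧ ∑ c, s c < ∑ c, s' c := by
  -- `k` is the first label that is used too rarely, `i < k` one that is used too often.
  obtain ⟨k, hk, hmin⟩ : ∃ k, #{c | s c = k} < α k ∧ ∀ j < k, α j ≤ #{c | s c = j} :=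
    ⟨Nat.find hex, Nat.find_spec hex, fun j hj => not_lt.mp (Nat.find_min hex hj)⟩
  obtain ⟨i, hik, hi⟩ : ∃ i < k, α i < #{c | s c = i} := by
    by_contra! hcon
    have sum_le : ∑ j ∈ Finset.range k, #{c | s c = j} ≤ ∑ j ∈ Finset.range k, α j :=
      Finset.sum_le_sum fun j hj => hcon j (Finset.mem_range.mp hj)
    have sum_succ := Finset.sum_card_fiberwise_eq_card_filter Finset.univ (Finset.range (k + 1)) s
    simp only [Finset.mem_range] at sum_succ
    have := hdom (k + 1)
    rw [← sum_succ, Finset.sum_range_succ, Finset.sum_range_succ] at this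
    omega
  obtain ⟨c, rfl, hc⟩ := exists_label_eq_forall_col_ne hs ((hk.trans_le (hα hik.le)).trans hi)
  refine ⟨update s c k, injective_update_label hs hc, sum_range_le_card_update_lt hdom hmin hi, ?_⟩
  refine Finset.sum_lt_sum (fun d _ => ?_) ⟨c, Finset.mem_univ c, by simpa using hik⟩
  rw [update_apply]
  split_ifs with h
  exacts [h ▸ hik.le, le_rfl]

lemma label_lt_of_card_le {N : ℕ} (hN : Fintype.card ι ≤ ∑ i ∈ Finset.range N, α i)
    (hdom : ∀ K, ∑ i ∈ Finset.range K, α i ≤ #{c | s c < K}) (c : ι) : s c < N :=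
  Finset.card_filter_eq_iff.mp ((Finset.card_le_univ _).antisymm (hN.trans (hdom N))) c
    (Finset.mem_univ c)

lemma card_label_eq_of_forall_le {N : ℕ} (hN : Fintype.card ι ≤ ∑ i ∈ Finset.range N, α i)
    (hle : ∀ i, α i ≤ #{c | s c = i}) (i : ℕ) : #{c | s c = i} = α i := by
  have hNM : N ≤ max N (i + 1) := le_max_left _ _
  have sum_eq : ∑ j ∈ Finset.range (max N (i + 1)), α j =
      ∑ j ∈ Finset.range (max N (i + 1)), #{c | s c = j} := by
    refine (Finset.sum_le_sum fun j _ => hle j).antisymm ?_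
    rw [Finset.sum_card_fiberwise_eq_card_filter]
    exact (Finset.card_le_univ _).trans
      (hN.trans (Finset.sum_le_sum_of_subset (Finset.range_mono hNM)))
  exact ((Finset.sum_eq_sum_iff_of_le fun j _ => hle j).mp sum_eq i (by simp)).symm

theorem exists_label_card_eq (hα : Antitone α) {N : ℕ}
    (hN : Fintype.card ι ≤ ∑ i ∈ Finset.range N, α i) (hs : Injective fun c => (col c, s c))
    (hdom : ∀ K, ∑ i ∈ Finset.range K, α i ≤ #{c | s c < K}) :
    ∃ t : ι → ℕ, Injective (fun c => (col c, t c)) ∧ ∀ i, #{c | t c = i} = α i := by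
  let good : Set (ι → ℕ) := {t | Injective (fun c => (col c, t c)) ∧
    ∀ K, ∑ i ∈ Finset.range K, α i ≤ #{c | t c < K}}
  have finite_good : good.Finite := (Set.Finite.pi' fun _ => Set.finite_Iio N).subset
    fun t ht c => label_lt_of_card_le hN ht.2 c
  obtain ⟨t, ⟨ht, hdom_t⟩, hmax⟩ :=
    Set.exists_max_image good (fun t => ∑ c, t c) finite_good ⟨s, hs, hdom⟩
  refine ⟨t, ht, card_label_eq_of_forall_le hN fun i => ?_⟩
  by_contra! hi
  obtain ⟨t', ht', hdom', hlt⟩ := exists_label_sum_lt hα ht hdom_t ⟨i, hi⟩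
  exact (hmax t' ⟨ht', hdom'⟩).not_gt hlt

end Exchange

section Dominance

lemma exists_equiv_comp_eq {α β γ : Type*} [Fintype α] [Fintype β] [DecidableEq γ] {f : α → γ}
    {g : β → γ} (h : ∀ i, #{a | f a = i} = #{b | g b = i}) : ∃ e : α ≃ β, ∀ a, g (e a) = f a := by
  have e (i : γ) : Nonempty ({a // f a = i} ≃ {b // g b = i}) :=
    Fintype.card_eq.mp (by simpa only [Fintype.card_subtype] using h i)
  exact ⟨Equiv.ofFiberEquiv fun i => (e i).some, Equiv.ofFiberEquiv_map _⟩

variable {n : ℕ} {lam mu : YoungDiagram}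

lemma dominates_of_injective_col_rowIndex (hlam : lam.card = n) {T : mu.cells ≃ Fin n}
    (hT : Injective fun c : mu.cells => (c.1.2, rowIndex lam (T c))) : Dominates mu lam := by
  intro k
  calc rowPartialSum lam k = #{m : Fin n | rowIndex lam m < k} := (card_rowIndex_lt hlam k).symm
    _ = #{c : mu.cells | rowIndex lam (T c) ∈ Finset.range k} :=
        (Finset.card_equiv T (by simp)).symm
    _ ≤ rowPartialSum mu k := by
        simpa using card_label_mem_le_rowPartialSum hT (Finset.range k)

lemma Dominates.exists_injective_col_rowIndex (hdom : Dominates mu lam) (hlam : lam.card = n)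
    (hmu : mu.card = n) :
    ∃ T : mu.cells ≃ Fin n, Injective fun c : mu.cells => (c.1.2, rowIndex lam (T c)) := by
  obtain ⟨s, hs, hcard⟩ := exists_label_card_eq (ι := mu.cells) (s := fun c => c.1.1)
    (col := fun c => c.1.2) (fun i j h => lam.rowLen_anti i j h)
    (by rw [Fintype.card_coe]; exact ((rowPartialSum_card lam).trans (hlam.trans hmu.symm)).ge)
    (fun _ _ h => Subtype.ext (Prod.swap_injective h))
    (fun K => (hdom K).trans_eq (card_cells_row_lt mu K).symm)
  obtain ⟨T, hT⟩ := exists_equiv_comp_eq (f := s) (g := fun m : Fin n => rowIndex lam m)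
    fun i => (hcard i).trans (card_rowIndex_eq hlam i).symm
  exact ⟨T, by simpa only [hT] using hs⟩

end Dominance

/-- The multiplicity of the Specht module `SP_μ` in the representation of `S_n` induced
from the identity representation of the Young subgroup `H(λ)` is nonzero iff `μ ⊵ λ`. -/
theorem mult_ne_zero_iff_dominates (n : ℕ) (lam mu : YoungDiagram)
    (hlam : lam.card = n) (hmu : mu.card = n) :
    innerChar (indTrivChar (youngH n lam)) (spechtChar n mu) ≠ 0 ↔ Dominates mu lam := by
  rw [innerChar_indTrivChar_spechtChar_ne_zero_iff]
  exact ⟨fun ⟨_, hT⟩ => dominates_of_injective_col_rowIndex hlam hT,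
    fun hdom => hdom.exists_injective_col_rowIndex hlam hmu⟩

end
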